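/- Let G = (V,E) be a connected multigraph, U a clique of G, M = E_G(U) the set of edges with exactly one end in U, and N ⊆ E(G − U). Suppose each component of G[M] is a star with its center in V − U (equivalently, each vertex of U is incident with at most one edge of M). Let G•U be the graph obtained from G by contracting all edges of G[U], with u the vertex of G•U resulting from U. Then τ_G(M ∪ N) = |U|^{|U| − 2 − |M|} · Σ_{T ∈ ST_{G•U}(N)} |U|^{|E_T(u)|}, where ST_{G•U}(N) is the set of spanning trees of G•U containing all edges of N and E_T(u) is the set of edges of T incident with u. -/

import Mathlib

/-!
Spanning trees of multigraphs: common definitions.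

A multigraph on a vertex type `V` with edge type `E` is given by an incidence
map `inc : E → Sym2 V` sending each edge to its (unordered) pair of endpoints.
-/

namespace PaperST

universe u v

/-- A multigraph on vertex type `V` with edge type `E`. -/
structure Multigraph (V : Type u) (E : Type v) where
  /-- the two (possibly equal) endpoints of each edge -/
  inc : E → Sym2 V

namespace Multigraph

variable {V : Type u} {E : Type v}

/-- One step along an edge of `T`. -/
def Step (G : Multigraph V E) (T : Set E) (u v : V) : Prop :=
  ∃ e ∈ T, G.inc e = s(u, v)

theorem step_symm (G : Multigraph V E) (T : Set E) : Symmetric (G.Step T) := by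
  rintro u v ⟨e, he, hinc⟩
  exact ⟨e, he, by rw [hinc]; exact Sym2.eq_swap⟩

/-- Reachability using only edges in `T`. -/
def Reach (G : Multigraph V E) (T : Set E) : V → V → Prop :=
  Relation.ReflTransGen (G.Step T)

/-- The spanning subgraph `G⟨T⟩` is connected. -/
def ConnectedOn (G : Multigraph V E) (T : Set E) : Prop :=
  ∀ u v : V, G.Reach T u v

/-- `G` is connected. -/
def Connected (G : Multigraph V E) : Prop :=
  G.ConnectedOn Set.univ

/-- `G` has no loops. -/
def Loopless (G : Multigraph V E) : Prop :=
  ∀ e : E, ¬ (G.inc e).IsDiag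

/-- A spanning tree of a (finite) multigraph: a connected spanning subgraph
with `|V| - 1` edges. -/
def IsSpanningTree (G : Multigraph V E) (T : Set E) : Prop :=
  G.ConnectedOn T ∧ T.ncard + 1 = Nat.card V

/-- The set `ST_G(M)` of spanning trees of `G` containing all edges of `M`. -/
def ST (G : Multigraph V E) (M : Set E) : Set (Set E) :=
  {T | G.IsSpanningTree T ∧ M ⊆ T}

/-- `τ_G(M)`: the number of spanning trees of `G` containing all edges of `M`. -/
noncomputable def tau (G : Multigraph V E) (M : Set E) : ℕ :=
  (G.ST M).ncard

/-- The spanning subgraph `G⟨W⟩` is a forest (no cycles): there are no loops in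
`W` and every edge of `W` is a bridge of `G⟨W⟩`. -/
def IsForest (G : Multigraph V E) (W : Set E) : Prop :=
  ∀ e ∈ W, ¬ (G.inc e).IsDiag ∧
    ∀ u v : V, G.inc e = s(u, v) → ¬ G.Reach (W \ {e}) u v

/-- Edges with all endpoints in `U`: the edge set of the induced subgraph `G[U]`. -/
def edgesWithin (G : Multigraph V E) (U : Set V) : Set E :=
  {e | ∀ v ∈ G.inc e, v ∈ U}

/-- `E_G(U₁, U₂)`: edges with one end in `U₁` and the other end in `U₂`. -/
def edgesBetween (G : Multigraph V E) (U₁ U₂ : Set V) : Set E :=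
  {e | ∃ u v, G.inc e = s(u, v) ∧ u ∈ U₁ ∧ v ∈ U₂}

/-- `E_G(U) = E_G(U, V − U)`: edges with one end in `U` and the other outside. -/
def edgeBoundary (G : Multigraph V E) (U : Set V) : Set E :=
  G.edgesBetween U Uᶜ

/-- `U` is a clique of `G`: the induced subgraph `G[U]` is a complete graph,
i.e. exactly one edge joins each pair of distinct vertices of `U`, and there
are neither loops nor parallel edges inside `U`. -/
def IsClique (G : Multigraph V E) (U : Set V) : Prop :=
  (∀ u ∈ U, ∀ v ∈ U, u ≠ v → ∃! e : E, G.inc e = s(u, v)) ∧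
    ∀ e ∈ G.edgesWithin U, ¬ (G.inc e).IsDiag

/-- The degree of a vertex: the number of edges incident with it. -/
noncomputable def degree (G : Multigraph V E) (v : V) : ℕ :=
  {e : E | v ∈ G.inc e}.ncard

/-- The vertices incident with some edge of `W`: the vertex set of `G[W]`. -/
def supp (G : Multigraph V E) (W : Set E) : Set V :=
  {v | ∃ e ∈ W, v ∈ G.inc e}

/-- Edges `e` and `f` lie in the same component of `G[W]`. -/
def EdgeConn (G : Multigraph V E) (W : Set E) (e f : E) : Prop :=
  ∃ u v : V, u ∈ G.inc e ∧ v ∈ G.inc f ∧ G.Reach W u v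

/-- Every component of `G[W]` is a star whose center lies in `C`. -/
def StarComponents (G : Multigraph V E) (W : Set E) (C : Set V) : Prop :=
  ∀ e ∈ W, ∃ w ∈ C, ∀ f ∈ W, G.EdgeConn W e f →
    (w ∈ G.inc f ∧ ¬ (G.inc f).IsDiag ∧
      ∀ g ∈ W, G.EdgeConn W e g → G.inc g = G.inc f → g = f)

/-- The setoid on `V` identifying the vertices connected by edges of `W`. -/
def contractSetoid (G : Multigraph V E) (W : Set E) : Setoid V where
  r := G.Reach W
  iseqv := ⟨fun _ => Relation.ReflTransGen.refl,
    fun h => (@Relation.ReflTransGen.symmetric _ _ ⟨fun _ _ h' => G.step_symm W h'⟩).symm _ _ h,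
    fun h h' => Relation.ReflTransGen.trans h h'⟩

/-- The contraction `G/W` of the edges in `W`. -/
def contract (G : Multigraph V E) (W : Set E) :
    Multigraph (Quotient (G.contractSetoid W)) {e : E // e ∉ W} :=
  ⟨fun e => (G.inc e.val).map (Quotient.mk (G.contractSetoid W))⟩

/-- Deletion `G − D` of the edges in `D`. -/
def deleteEdges (G : Multigraph V E) (D : Set E) : Multigraph V {e : E // e ∉ D} :=
  ⟨fun e => G.inc e.val⟩

/-- The closed neighbourhood `N_G[S]`. -/
def closedNbhd (G : Multigraph V E) (S : Set V) : Set V :=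
  S ∪ {v | ∃ u ∈ S, ∃ e : E, G.inc e = s(u, v)}

/-- The induced subgraph `G[A]`, described using a choice `ends` of the pair of
endpoints of each edge. -/
def induce (G : Multigraph V E) (A : Set V) (ends : E → V × V)
    (hends : ∀ e, G.inc e = s((ends e).1, (ends e).2)) :
    Multigraph A {e : E // e ∈ G.edgesWithin A} :=
  ⟨fun e => s(⟨(ends e.val).1, e.prop _ (by rw [hends]; exact Sym2.mem_mk_left _ _)⟩,
              ⟨(ends e.val).2, e.prop _ (by rw [hends]; exact Sym2.mem_mk_right _ _)⟩)⟩

end Multigraph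


open Multigraph

/-!
Write `n = |U|` and fix `R = T ∩ E(G - U)`, a forest with `c` components in `G - U`. Let `dₐ` be the
number of edges of `M` that end in the component `a` of `R`.

A spanning tree of `G•U` with outside part `R` picks one edge of `M` for each component of `R`, so
there are `∏ dₐ` of them, each with `|E_T(u)| = c`. Contracting the forest `M ∪ R` turns the
spanning trees of `G` that contain `M` and have outside part `R` into the spanning trees made of
edges of `G[U]`. Since the ends in `U` of the edges of `M` are distinct, the contraction merges `dₐ`
vertices of `U` into the class of `a` and leaves the other `n - |M|` vertices of `U` alone.

Classes of sizes `w` are joined by `w x * w y` parallel edges, and such a multigraph on `k` vertices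
has `n ^ (k - 2) * ∏ w x` spanning trees: count the pairs (tree, edge of it) in two ways, contract
the edge, and induct. Here `k = c + n - |M|`, so the two counts differ by the factor
`n ^ (n - 2 - |M|) * n ^ c`. Multiplying out the negative powers of `n` keeps all counts in `ℕ`.
-/

namespace Multigraph

open Finset
open scoped Classical

variable {V : Type u} {E : Type v} {I : Type*} {G : Multigraph V E} {F S T : Set E} {x y : V}

/-! ### Reachability and contraction -/

theorem Reach.symm (h : G.Reach T x y) : G.Reach T y x :=
  (G.contractSetoid T).iseqv.symm h

theorem reach_of_inc {e : E} (he : e ∈ T) (hinc : G.inc e = s(x, y)) : G.Reach T x y :=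
  .single ⟨e, he, hinc⟩

theorem Reach.lift {V' E' : Type*} {H : Multigraph V' E'} {S : Set E'} (f : V → V')
    (hf : ∀ e ∈ T, ∀ x y, G.inc e = s(x, y) → H.Reach S (f x) (f y)) (h : G.Reach T x y) :
    H.Reach S (f x) (f y) :=
  Relation.ReflTransGen.lift' f (fun _ _ ⟨e, he, hinc⟩ => hf e he _ _ hinc) _ _ h

theorem Reach.mono (hST : S ⊆ T) (h : G.Reach S x y) : G.Reach T x y :=
  h.lift id fun _ he _ _ hinc => reach_of_inc (hST he) hinc

theorem Reach.apply_eq {α : Type*} (f : V → α)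
    (hf : ∀ e ∈ T, ∀ x y, G.inc e = s(x, y) → f x = f y) (h : G.Reach T x y) : f x = f y := by
  induction h with
  | refl => rfl
  | tail _ hstep ih =>
    obtain ⟨e, he, hinc⟩ := hstep
    exact ih.trans (hf e he _ _ hinc)

theorem Reach.exists_inc (h : G.Reach T x y) (hxy : x ≠ y) : ∃ e ∈ T, y ∈ G.inc e := by
  rcases Relation.ReflTransGen.cases_tail h with heq | ⟨z, -, e, he, hinc⟩
  · exact absurd heq.symm hxy
  · exact ⟨e, he, hinc ▸ Sym2.mem_mk_right z y⟩

/-- The multigraph obtained by identifying vertices along `π`; edges inside a fibre of `π` are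
kept, as loops. -/
def map (G : Multigraph V E) (π : V → I) : Multigraph I E :=
  ⟨fun e => (G.inc e).map π⟩

theorem Reach.map (π : V → I) (h : G.Reach T x y) : (G.map π).Reach T (π x) (π y) :=
  h.lift π fun _ he _ _ hinc => reach_of_inc he (congrArg (Sym2.map π) hinc)

/-- `π` is a quotient map of `V` onto the set of components of the spanning subgraph `G⟨F⟩`, so that
`G.map π` is the contraction `G/F` with the edges of `F` kept as loops. -/
structure IsComponentMap (G : Multigraph V E) (F : Set E) (π : V → I) : Prop where
  surjective : Function.Surjective π
  eq_iff_reach : ∀ x y, π x = π y ↔ G.Reach F x y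

theorem isComponentMap_mk (G : Multigraph V E) (F : Set E) :
    G.IsComponentMap F (Quotient.mk (G.contractSetoid F)) :=
  ⟨Quotient.mk_surjective, fun _ _ => Quotient.eq⟩

theorem isComponentMap_rangeFactorization {σ : V → V}
    (hF : ∀ e ∈ F, ∀ x y, G.inc e = s(x, y) → σ x = σ y) (hσ : ∀ x, G.Reach F x (σ x)) :
    G.IsComponentMap F (Set.rangeFactorization σ) where
  surjective := Set.rangeFactorization_surjective
  eq_iff_reach x y := by
    rw [Set.rangeFactorization_eq_rangeFactorization_iff]
    exact ⟨fun h => (hσ x).trans (h ▸ (hσ y).symm), fun h => h.apply_eq σ hF⟩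

theorem isComponentMap_update {e : E} {i j : V} (hinc : G.inc e = s(i, j)) :
    G.IsComponentMap {e} (Set.rangeFactorization (Function.update id j i)) := by
  refine isComponentMap_rangeFactorization ?_ fun x => ?_
  · rintro _ rfl x y hxy
    rw [hinc, Sym2.eq_iff] at hxy
    simp only [Function.update_apply, id]
    grind
  · rw [Function.update_apply]
    split_ifs with hx
    exacts [hx ▸ (reach_of_inc (Set.mem_singleton e) hinc).symm, .refl]

namespace IsComponentMap

variable {π : V → I}

theorem isDiag_map_inc (hπ : G.IsComponentMap F π) {e : E} (he : e ∈ F) :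
    ((G.map π).inc e).IsDiag := by
  change ((G.inc e).map π).IsDiag
  induction hinc : G.inc e with
  | _ x y => exact (hπ.eq_iff_reach x y).2 (reach_of_inc he hinc)

theorem reach_of_reach_map (hπ : G.IsComponentMap F π) (h : (G.map π).Reach S (π x) (π y)) :
    G.Reach (F ∪ S) x y := by
  have reach_of_eq {a b : V} (hab : π a = π b) : G.Reach (F ∪ S) a b :=
    ((hπ.eq_iff_reach a b).1 hab).mono Set.subset_union_left
  obtain ⟨r, hr⟩ := hπ.surjective.hasRightInverse
  have hreps : G.Reach (F ∪ S) (r (π x)) (r (π y)) := by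
    refine h.lift r fun e he a b hab => ?_
    change (G.inc e).map π = s(a, b) at hab
    induction hinc : G.inc e with
    | _ p q =>
      have hpq : G.Reach (F ∪ S) (r (π p)) (r (π q)) :=
        (reach_of_eq (hr _)).trans ((reach_of_inc (.inr he) hinc).trans (reach_of_eq (hr _).symm))
      rw [hinc, Sym2.map_mk, Sym2.eq_iff] at hab
      rcases hab with ⟨rfl, rfl⟩ | ⟨rfl, rfl⟩
      exacts [hpq, hpq.symm]
  exact (reach_of_eq (hr _).symm).trans (hreps.trans (reach_of_eq (hr _)))

theorem connectedOn_map (hπ : G.IsComponentMap F π) :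
    (G.map π).ConnectedOn S ↔ G.ConnectedOn (F ∪ S) := by
  refine ⟨fun h x y => hπ.reach_of_reach_map (h _ _), fun h => ?_⟩
  refine hπ.surjective.forall₂.2 fun x y => ?_
  refine (h x y).lift π fun e he a b hinc => ?_
  rcases he with he | he
  · rw [(hπ.eq_iff_reach a b).2 (reach_of_inc he hinc)]
    exact .refl
  · exact (reach_of_inc he hinc).map π

end IsComponentMap

theorem connectedOn_contract {W : Set E} {S : Set {e : E // e ∉ W}} :
    (G.contract W).ConnectedOn S ↔ G.ConnectedOn (W ∪ Subtype.val '' S) := by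
  have hstep : (G.contract W).Step S =
      (G.map (Quotient.mk (G.contractSetoid W))).Step (Subtype.val '' S) := by
    ext a b
    simp only [Step, Set.exists_mem_image, contract, map]
  rw [← (G.isComponentMap_mk W).connectedOn_map]
  simp only [ConnectedOn, Reach, hstep]

/-! ### Cardinality bounds for connected spanning subgraphs -/

theorem ConnectedOn.card_le [Finite V] [Finite E] (h : G.ConnectedOn T) :
    Nat.card V ≤ T.ncard + 1 := by
  rcases isEmpty_or_nonempty V with hV | hV
  · simp
  let A : SimpleGraph V := SimpleGraph.fromRel (G.Step T)
  have hA : A.Connected := by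
    refine ⟨fun x y => ?_⟩
    rw [SimpleGraph.reachable_iff_reflTransGen]
    refine Relation.ReflTransGen.lift' id (fun a b hab => ?_) _ _ (h x y)
    rcases eq_or_ne a b with rfl | hne
    exacts [.refl, .single ⟨hne, .inl hab⟩]
  have hedge : A.edgeSet ⊆ G.inc '' T := by
    rintro ⟨x, y⟩ ⟨-, ⟨e, he, hinc⟩ | ⟨e, he, hinc⟩⟩
    exacts [⟨e, he, hinc⟩, ⟨e, he, hinc.trans Sym2.eq_swap⟩]
  calc Nat.card V ≤ A.edgeSet.ncard + 1 := hA.card_vert_le_card_edgeSet_add_one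
    _ ≤ T.ncard + 1 := by
      gcongr
      exact (Set.ncard_le_ncard hedge).trans (Set.ncard_image_le T.toFinite)

theorem IsComponentMap.card_le [Finite V] [Finite E] {π : V → I} (hπ : G.IsComponentMap F π) :
    Nat.card V ≤ F.ncard + Nat.card I := by
  -- Identifying one representative per component with a single vertex makes `F` connected.
  obtain ⟨r, hr⟩ := hπ.surjective.hasRightInverse
  let q (v : V) : Option ↥(Set.range r)ᶜ := if hv : v ∈ Set.range r then none else some ⟨v, hv⟩
  have hconn : (G.map q).ConnectedOn F := by
    have hnone (z : Option ↥(Set.range r)ᶜ) : (G.map q).Reach F z none := by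
      rcases z with - | ⟨v, hv⟩
      · exact .refl
      · have hreach := ((hπ.eq_iff_reach v (r (π v))).1 (hr _).symm).map q
        rwa [show q v = some ⟨v, hv⟩ from dif_neg hv,
          show q (r (π v)) = none from dif_pos (Set.mem_range_self _)] at hreach
    exact fun a b => (hnone a).trans (hnone b).symm
  have hle := hconn.card_le
  have hcompl := Set.ncard_add_ncard_compl (Set.range r)
  rw [Finite.card_option, Nat.card_coe_set_eq] at hle
  rw [Set.ncard_range_of_injective hr.injective] at hcompl
  lia

theorem IsSpanningTree.not_isDiag [Finite V] [Finite E] (hT : G.IsSpanningTree T) {e : E}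
    (he : e ∈ T) : ¬ (G.inc e).IsDiag := by
  intro hdiag
  have hconn : G.ConnectedOn (T \ {e}) := fun x y => by
    refine (hT.1 x y).lift id fun f hf a b hinc => ?_
    by_cases hfe : f = e
    · rw [← hfe, hinc, Sym2.mk_isDiag_iff] at hdiag
      exact hdiag ▸ .refl
    · exact reach_of_inc ⟨hf, hfe⟩ hinc
  have hle := hconn.card_le
  have hcard := Set.ncard_sdiff_singleton_add_one he T.toFinite
  have htree := hT.2
  lia

theorem isSpanningTree_iff_eq_empty [Finite E] (hV : Nat.card V = 1) :
    G.IsSpanningTree T ↔ T = ∅ := by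
  have := (Nat.card_eq_one_iff_unique.1 hV).1
  have hconn : G.ConnectedOn T := fun x y => Subsingleton.elim x y ▸ .refl
  rw [IsSpanningTree, and_iff_right hconn, hV, Nat.add_eq_right, Set.ncard_eq_zero]

/-! ### Spanning trees containing a given forest -/

section SetsBetween

variable [Fintype E] {P : Set E → Prop} {A B X R : Set E}

/-- The sets `T` of edges with property `P` such that `A ⊆ T ⊆ B`. -/
noncomputable def setsBetween (P : Set E → Prop) (A B : Set E) : Finset (Set E) :=
  {T | P T ∧ A ⊆ T ∧ T ⊆ B}

theorem mem_setsBetween : T ∈ setsBetween P A B ↔ P T ∧ A ⊆ T ∧ T ⊆ B := by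
  simp [setsBetween]

theorem tau_eq_card_setsBetween (A : Set E) :
    G.tau A = #(setsBetween G.IsSpanningTree A Set.univ) := by
  rw [tau, ← Set.ncard_coe_finset]
  congr 1
  ext T
  simp [ST, mem_setsBetween]

theorem card_setsBetween_sdiff {Q : Set E → Prop} (hFA : F ⊆ A) (hFB : F ⊆ B)
    (hPQ : ∀ S, Disjoint F S → (P (F ∪ S) ↔ Q S)) :
    #(setsBetween P A B) = #(setsBetween Q (A \ F) (B \ F)) := by
  refine Finset.card_bij' (fun T _ => T \ F) (fun S _ => F ∪ S) (fun T hT => ?_) (fun S hS => ?_)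
    (fun T hT => ?_) (fun S hS => ?_)
  · obtain ⟨hP, hA, hB⟩ := mem_setsBetween.1 hT
    rw [← Set.union_sdiff_cancel (hFA.trans hA), hPQ _ Set.disjoint_sdiff_right] at hP
    exact mem_setsBetween.2 ⟨hP, Set.sdiff_subset_sdiff_left hA, Set.sdiff_subset_sdiff_left hB⟩
  · obtain ⟨hQ, hA, hB⟩ := mem_setsBetween.1 hS
    refine mem_setsBetween.2 ⟨(hPQ S (Set.disjoint_sdiff_right.mono_right hB)).2 hQ, ?_, ?_⟩
    · exact Set.sdiff_subset_iff.1 hA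
    · exact Set.union_subset hFB (hB.trans Set.sdiff_subset)
  · exact Set.union_sdiff_cancel (hFA.trans (mem_setsBetween.1 hT).2.1)
  · have hdisj : Disjoint F S := Set.disjoint_sdiff_right.mono_right (mem_setsBetween.1 hS).2.2
    exact Set.union_sdiff_cancel_left hdisj.inter_eq.subset

theorem filter_inter_eq_setsBetween (hA : A ∩ X ⊆ R) (hB : R ⊆ B ∩ X) :
    {T ∈ setsBetween P A B | T ∩ X = R} = setsBetween P (A ∪ R) (B \ X ∪ R) := by
  ext T
  simp only [mem_filter, mem_setsBetween]
  constructor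
  · rintro ⟨⟨hP, hAT, hTB⟩, rfl⟩
    refine ⟨hP, Set.union_subset hAT Set.inter_subset_left, fun e he => ?_⟩
    by_cases heX : e ∈ X
    exacts [.inr ⟨he, heX⟩, .inl ⟨hTB he, heX⟩]
  · rintro ⟨hP, hAT, hTB⟩
    obtain ⟨hAT, hRT⟩ := Set.union_subset_iff.1 hAT
    refine ⟨⟨hP, hAT, fun e he => ?_⟩, Set.Subset.antisymm ?_ ?_⟩
    · exact (hTB he).elim (·.1) (hB · |>.1)
    · exact fun e he => (hTB he.1).elim (absurd he.2 ·.2) id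
    · exact fun e he => ⟨hRT he, (hB he).2⟩

theorem sum_setsBetween_fiberwise_inter {α : Type*} [AddCommMonoid α] (P : Set E → Prop)
    (A B X : Set E) (f : Set E → α) :
    ∑ T ∈ setsBetween P A B, f T =
      ∑ R with A ∩ X ⊆ R ∧ R ⊆ B ∩ X, ∑ T ∈ setsBetween P (A ∪ R) (B \ X ∪ R), f T := by
  rw [← Finset.sum_fiberwise_of_maps_to (g := (· ∩ X)) (fun T hT => ?_) f]
  · refine Finset.sum_congr rfl fun R hR => ?_
    obtain ⟨hA, hB⟩ := (mem_filter.1 hR).2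
    rw [filter_inter_eq_setsBetween hA hB]
  · obtain ⟨-, hA, hB⟩ := mem_setsBetween.1 hT
    exact mem_filter.2 ⟨mem_univ _, Set.inter_subset_inter_left X hA,
      Set.inter_subset_inter_left X hB⟩

theorem sum_setsBetween_union {α : Type*} [AddCommMonoid α] (hAB : Disjoint A B)
    (P : Set E → Prop) (f : Set E → α) :
    ∑ T ∈ setsBetween P A (A ∪ B), f T =
      ∑ S : Set B with P (A ∪ Subtype.val '' S), f (A ∪ Subtype.val '' S) := by
  have hunion {T : Set E} (hT : T ∈ setsBetween P A (A ∪ B)) :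
      A ∪ Subtype.val '' (Subtype.val ⁻¹' T : Set B) = T := by
    obtain ⟨-, hAT, hTB⟩ := mem_setsBetween.1 hT
    rw [Subtype.image_preimage_coe]
    exact Set.Subset.antisymm (Set.union_subset hAT Set.inter_subset_right)
      fun e he => (hTB he).imp id fun h => ⟨h, he⟩
  refine Finset.sum_bij' (fun T _ => Subtype.val ⁻¹' T) (fun S _ => A ∪ Subtype.val '' S)
    (fun T hT => ?_) (fun S hS => ?_) (fun T hT => hunion hT) (fun S _ => ?_)
    (fun T hT => by rw [hunion hT])
  · rw [mem_filter_univ, hunion hT]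
    exact (mem_setsBetween.1 hT).1
  · exact mem_setsBetween.2 ⟨(mem_filter.1 hS).2, Set.subset_union_left,
      Set.union_subset_union_right A (Subtype.coe_image_subset B S)⟩
  · rw [Set.preimage_union, Subtype.preimage_coe_eq_empty.2 hAB.symm.inter_eq, Set.empty_union,
      Set.preimage_image_eq S Subtype.val_injective]

theorem IsComponentMap.card_setsBetween {π : V → I} (hπ : G.IsComponentMap F π)
    (hF : F.ncard + Nat.card I = Nat.card V) (hFA : F ⊆ A) (hFB : F ⊆ B) :
    #(setsBetween G.IsSpanningTree A B) =
      #(setsBetween (G.map π).IsSpanningTree (A \ F) (B \ F)) := by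
  refine card_setsBetween_sdiff hFA hFB fun S hFS => and_congr hπ.connectedOn_map.symm ?_
  rw [Set.ncard_union_eq hFS]
  lia

end SetsBetween

/-! ### Cayley's formula for complete multigraphs -/

section Cayley

variable [Fintype E] {D : Set E} {w : V → ℕ}

/-- Distinct vertices `x` and `y` are joined by exactly `w x * w y` edges of `D`. Contracting edges
of a complete graph produces multigraphs of this kind, `w x` being the number of vertices merged
into `x`. -/
def IsWeightedComplete (G : Multigraph V E) (D : Set E) (w : V → ℕ) : Prop :=
  ∀ x y, x ≠ y → #{e | e ∈ D ∧ G.inc e = s(x, y)} = w x * w y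

theorem IsWeightedComplete.sdiff_loops (hD : G.IsWeightedComplete D w)
    (hF : ∀ e ∈ F, (G.inc e).IsDiag) : G.IsWeightedComplete (D \ F) w := by
  intro x y hxy
  rw [← hD x y hxy]
  congr 1
  ext e
  simp only [mem_filter_univ]
  refine and_congr_left fun hinc => ⟨And.left, fun heD => ⟨heD, fun heF => hxy ?_⟩⟩
  simpa only [hinc, Sym2.mk_isDiag_iff] using hF e heF

variable [Fintype V]

theorem IsWeightedComplete.map (hD : G.IsWeightedComplete D w) (π : V → I) :
    (G.map π).IsWeightedComplete D fun i => ∑ x with π x = i, w x := by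
  intro i j hij
  have hne {x y : V} (hx : π x = i) (hy : π y = j) : x ≠ y := by
    rintro rfl
    exact hij (hx.symm.trans hy)
  have hunion : ({e | e ∈ D ∧ (G.map π).inc e = s(i, j)} : Finset E) =
      (({x | π x = i} : Finset V) ×ˢ ({y | π y = j} : Finset V)).biUnion
        fun p => {e | e ∈ D ∧ G.inc e = s(p.1, p.2)} := by
    ext e
    simp only [mem_filter_univ, mem_biUnion, mem_product, Prod.exists]
    change e ∈ D ∧ (G.inc e).map π = s(i, j) ↔ _
    induction G.inc e with | _ x y =>
    simp only [Sym2.map_mk, Sym2.eq_iff]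
    grind
  rw [hunion, Finset.card_biUnion, Finset.sum_mul_sum, ← Finset.sum_product']
  · refine Finset.sum_congr rfl fun p hp => ?_
    simp only [mem_product, mem_filter, mem_univ, true_and] at hp
    exact hD p.1 p.2 (hne hp.1 hp.2)
  · rintro ⟨x, y⟩ hxy ⟨x', y'⟩ hxy' hpair
    simp only [coe_product, Set.mem_prod, mem_coe, mem_filter, mem_univ, true_and] at hxy hxy'
    refine Finset.disjoint_left.2 fun e he he' => hpair ?_
    have heq := (mem_filter.1 he).2.2.symm.trans (mem_filter.1 he').2.2
    rcases Sym2.eq_iff.1 heq with ⟨rfl, rfl⟩ | ⟨rfl, rfl⟩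
    exacts [rfl, absurd rfl (hne hxy.1 hxy'.2)]

theorem IsWeightedComplete.card_trees_union_mul_sq [Fintype I] {π : V → I}
    (hD : G.IsWeightedComplete D w) (hπ : G.IsComponentMap F π)
    (hF : F.ncard + Nat.card I = Nat.card V)
    (hI : ∀ (H : Multigraph I E) (D : Set E) (w : I → ℕ), H.IsWeightedComplete D w →
      #(setsBetween H.IsSpanningTree ∅ D) * (∑ i, w i) ^ 2 =
        (∑ i, w i) ^ Fintype.card I * ∏ i, w i) :
    #(setsBetween G.IsSpanningTree F (F ∪ D)) * (∑ x, w x) ^ 2 =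
      (∑ x, w x) ^ Fintype.card I * ∏ i, ∑ x with π x = i, w x := by
  rw [hπ.card_setsBetween hF subset_rfl Set.subset_union_left, sdiff_self, Set.union_sdiff_left,
    ← Finset.sum_fiberwise univ π w]
  exact hI _ _ _ ((hD.map π).sdiff_loops fun _ he => hπ.isDiag_map_inc he)

theorem sum_edgeFinset_top_sum {α : Type*} [Semiring α] (w : V → α) :
    ∑ z ∈ (⊤ : SimpleGraph V).edgeFinset, ∑ x ∈ z.toFinset, w x =
      (Fintype.card V - 1 : ℕ) * ∑ x, w x := by
  have hmem (z : Sym2 V) (x : V) : z ∈ (⊤ : SimpleGraph V).edgeFinset ∧ x ∈ z.toFinset ↔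
      z ∈ (⊤ : SimpleGraph V).incidenceFinset x ∧ x ∈ univ := by
    simp [SimpleGraph.incidenceSet]
  rw [Finset.sum_comm' hmem, Finset.mul_sum]
  refine Finset.sum_congr rfl fun x _ => ?_
  rw [Finset.sum_const, SimpleGraph.card_incidenceFinset_eq_degree,
    SimpleGraph.complete_graph_degree, nsmul_eq_mul]

theorem card_mul_card_trees (G : Multigraph V E) (D : Set E) :
    (Fintype.card V - 1) * #(setsBetween G.IsSpanningTree ∅ D) =
      ∑ z ∈ (⊤ : SimpleGraph V).edgeFinset, ∑ e with e ∈ D ∧ G.inc e = z,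
        #(setsBetween G.IsSpanningTree {e} D) := by
  have hcard (T) (hT : T ∈ setsBetween G.IsSpanningTree ∅ D) :
      #{e | (e ∈ D ∧ ¬ (G.inc e).IsDiag) ∧ e ∈ T} = Fintype.card V - 1 := by
    obtain ⟨htree, -, hTD⟩ := mem_setsBetween.1 hT
    have hset : {e | (e ∈ D ∧ ¬ (G.inc e).IsDiag) ∧ e ∈ T} = T :=
      Set.Subset.antisymm (fun e he => he.2) fun e he => ⟨⟨hTD he, htree.not_isDiag he⟩, he⟩
    rw [← Set.ncard_coe_finset, coe_filter_univ, hset, ← Nat.card_eq_fintype_card, ← htree.2,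
      Nat.add_sub_cancel]
  have hcontain (e : E) : setsBetween G.IsSpanningTree {e} D =
      {T ∈ setsBetween G.IsSpanningTree ∅ D | e ∈ T} := by
    ext T
    simp only [mem_filter, mem_setsBetween, Set.empty_subset, Set.singleton_subset_iff, true_and]
    tauto
  have hcount := Finset.sum_card_bipartiteAbove_eq_sum_card_bipartiteBelow
    (s := setsBetween G.IsSpanningTree ∅ D)
    (t := {e | e ∈ D ∧ ¬ (G.inc e).IsDiag}) fun T e => e ∈ T
  simp only [bipartiteAbove, bipartiteBelow, filter_filter, ← hcontain] at hcount
  rw [Finset.sum_congr rfl hcard, Finset.sum_const, smul_eq_mul, mul_comm] at hcount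
  rw [hcount, ← Finset.sum_fiberwise_of_maps_to (t := (⊤ : SimpleGraph V).edgeFinset) (g := G.inc)
    (fun e he => by simpa using (mem_filter.1 he).2.2)]
  refine Finset.sum_congr rfl fun z hz => Finset.sum_congr ?_ fun _ _ => rfl
  ext e
  simp only [SimpleGraph.mem_edgeFinset, SimpleGraph.edgeSet_top, Set.mem_compl_iff,
    Sym2.mem_diagSet] at hz
  simp only [mem_filter, mem_univ, true_and]
  grind

theorem prod_sum_fiber_eq_prod_image {α : Type*} [CommSemiring α] [Fintype I] {π : V → I}
    {r : I → V} {σ : V → V} (hπ : Function.Surjective π) (hr : Function.Injective r)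
    (hσ : ∀ x, r (π x) = σ x) (w : V → α) :
    ∏ i, ∑ x with π x = i, w x = ∏ a ∈ univ.image σ, ∑ x with σ x = a, w x := by
  obtain rfl : r ∘ π = σ := funext hσ
  rw [← Finset.image_image, Finset.image_univ_of_surjective hπ, Finset.prod_image hr.injOn]
  simp only [Function.comp_apply, hr.eq_iff]

theorem image_update_id {i j : V} (hij : i ≠ j) :
    univ.image (Function.update id j i) = univ.erase j := by
  ext x
  simp only [mem_image, mem_univ, true_and, mem_erase, and_true, Function.update_apply, id]
  constructor
  · rintro ⟨y, rfl⟩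
    split_ifs with hy
    exacts [hij, hy]
  · exact fun hx => ⟨x, if_neg hx⟩

theorem mul_prod_sum_fiber_update {α : Type*} [CommSemiring α] {i j : V} (hij : i ≠ j)
    (w : V → α) :
    w i * w j * ∏ a ∈ univ.erase j, ∑ x with Function.update id j i x = a, w x =
      (w i + w j) * ∏ x, w x := by
  have hi : ∑ x with Function.update id j i x = i, w x = w i + w j := by
    rw [← Finset.sum_pair hij]
    congr 1
    ext x
    simp only [mem_filter, mem_univ, true_and, Function.update_apply, id, mem_insert,
      mem_singleton]
    grind
  have hother (a) (ha : a ∈ (univ.erase j).erase i) :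
      ∑ x with Function.update id j i x = a, w x = w a := by
    rw [← Finset.sum_singleton w a]
    congr 1
    ext x
    simp only [mem_filter, mem_univ, true_and, Function.update_apply, id, mem_singleton]
    grind
  have hmem : i ∈ univ.erase j := mem_erase.2 ⟨hij, mem_univ i⟩
  rw [← Finset.mul_prod_erase _ _ hmem, hi, Finset.prod_congr rfl hother,
    ← Finset.mul_prod_erase univ w (mem_univ j), ← Finset.mul_prod_erase _ w hmem]
  ring

theorem card_range_update_add_one {i j : V} (hij : i ≠ j) :
    Fintype.card (Set.range (Function.update id j i)) + 1 = Fintype.card V := by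
  rw [← Set.toFinset_card, Set.toFinset_range, image_update_id hij,
    Finset.card_erase_add_one (mem_univ j), Finset.card_univ]

theorem IsWeightedComplete.sum_card_trees_mul_sq (hD : G.IsWeightedComplete D w) {i j : V}
    (hij : i ≠ j)
    (hcontract : ∀ (H : Multigraph (Set.range (Function.update id j i)) E) (D : Set E)
      (w : Set.range (Function.update id j i) → ℕ), H.IsWeightedComplete D w →
      #(setsBetween H.IsSpanningTree ∅ D) * (∑ a, w a) ^ 2 =
        (∑ a, w a) ^ Fintype.card (Set.range (Function.update id j i)) * ∏ a, w a) :
    (∑ e with e ∈ D ∧ G.inc e = s(i, j), #(setsBetween G.IsSpanningTree {e} D)) * (∑ x, w x) ^ 2 =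
      (∑ x, w x) ^ (Fintype.card V - 1) * (∏ x, w x) * ∑ x ∈ s(i, j).toFinset, w x := by
  have hcard := card_range_update_add_one hij
  have hedge (e) (he : e ∈ ({e | e ∈ D ∧ G.inc e = s(i, j)} : Finset E)) :
      #(setsBetween G.IsSpanningTree {e} D) * (∑ x, w x) ^ 2 =
        (∑ x, w x) ^ (Fintype.card V - 1) *
          ∏ a ∈ univ.erase j, ∑ x with Function.update id j i x = a, w x := by
    obtain ⟨heD, hinc⟩ := (mem_filter.1 he).2
    have hπ := isComponentMap_update hinc
    have hcount := hD.card_trees_union_mul_sq hπ (by simpa [add_comm] using hcard) hcontract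
    rwa [Set.singleton_union, Set.insert_eq_of_mem heD, Nat.eq_sub_of_add_eq hcard,
      prod_sum_fiber_eq_prod_image hπ.surjective Subtype.val_injective
        (Set.rangeFactorization_coe _), image_update_id hij] at hcount
  rw [Finset.sum_mul, Finset.sum_congr rfl hedge, Finset.sum_const, hD i j hij, smul_eq_mul,
    Sym2.toFinset_mk_eq, Finset.sum_pair hij, mul_assoc _ (∏ x, w x), mul_comm (∏ x, w x),
    ← mul_prod_sum_fiber_update hij]
  ring

theorem IsWeightedComplete.card_trees_mul_sq [Nonempty V] (hD : G.IsWeightedComplete D w) :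
    #(setsBetween G.IsSpanningTree ∅ D) * (∑ x, w x) ^ 2 =
      (∑ x, w x) ^ Fintype.card V * ∏ x, w x := by
  induction hc : Fintype.card V - 1 generalizing V D w with
  | zero =>
    have hV : Fintype.card V = 1 := by have := Fintype.card_pos (α := V); lia
    obtain ⟨x, hx⟩ := Fintype.card_eq_one_iff.1 hV
    have hunique : setsBetween G.IsSpanningTree ∅ D = {∅} := by
      ext T
      rw [mem_setsBetween, isSpanningTree_iff_eq_empty (by simpa using hV), mem_singleton]
      exact ⟨And.left, by rintro rfl; exact ⟨rfl, subset_rfl, Set.empty_subset D⟩⟩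
    rw [hunique, Finset.card_singleton, hV, Fintype.sum_eq_single x (fun y hy => absurd (hx y) hy),
      Fintype.prod_eq_single x (fun y hy => absurd (hx y) hy)]
    ring
  | succ c ih =>
    have hpair (z) (hz : z ∈ (⊤ : SimpleGraph V).edgeFinset) :
        (∑ e with e ∈ D ∧ G.inc e = z, #(setsBetween G.IsSpanningTree {e} D)) * (∑ x, w x) ^ 2 =
          (∑ x, w x) ^ (c + 1) * (∏ x, w x) * ∑ x ∈ z.toFinset, w x := by
      induction z with | _ i j =>
      have hij : i ≠ j := by simpa using hz
      have : Nonempty (Set.range (Function.update id j i)) := ⟨⟨_, i, rfl⟩⟩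
      have hcard := card_range_update_add_one hij
      rw [← hc]
      exact hD.sum_card_trees_mul_sq hij fun H D w hH => ih hH (by lia)
    apply Nat.eq_of_mul_eq_mul_left c.succ_pos
    calc (c + 1) * (#(setsBetween G.IsSpanningTree ∅ D) * (∑ x, w x) ^ 2)
      _ = ∑ z ∈ (⊤ : SimpleGraph V).edgeFinset,
            (∑ x, w x) ^ (c + 1) * (∏ x, w x) * ∑ x ∈ z.toFinset, w x := by
        rw [← mul_assoc, ← hc, card_mul_card_trees, Finset.sum_mul, hc, Finset.sum_congr rfl hpair]
      _ = (∑ x, w x) ^ (c + 1) * (∏ x, w x) * ((c + 1) * ∑ x, w x) := by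
        rw [← Finset.mul_sum, sum_edgeFinset_top_sum, hc, Nat.cast_id]
      _ = (c + 1) * ((∑ x, w x) ^ Fintype.card V * ∏ x, w x) := by
        rw [show Fintype.card V = c + 2 by lia]
        ring

end Cayley

/-! ### The boundary of a vertex set -/

section Boundary

variable {U : Set V} {e : E}

theorem mem_edgesWithin_iff (hinc : G.inc e = s(x, y)) :
    e ∈ G.edgesWithin U ↔ x ∈ U ∧ y ∈ U := by
  rw [edgesWithin, Set.mem_ofPred_eq, hinc, Sym2.ball]

theorem disjoint_edgesWithin_edgeBoundary : Disjoint (G.edgesWithin U) (G.edgeBoundary U) :=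
  Set.disjoint_left.2 fun _ he ⟨_, _, hinc, _, hy⟩ => hy ((mem_edgesWithin_iff hinc).1 he).2

theorem disjoint_edgesWithin_compl_edgeBoundary :
    Disjoint (G.edgesWithin Uᶜ) (G.edgeBoundary U) :=
  Set.disjoint_left.2 fun _ he ⟨_, _, hinc, hx, _⟩ => ((mem_edgesWithin_iff hinc).1 he).1 hx

theorem disjoint_edgesWithin_compl : Disjoint (G.edgesWithin U) (G.edgesWithin Uᶜ) := by
  refine Set.disjoint_left.2 fun e he he' => ?_
  exact he' _ (Sym2.out_fst_mem _) (he _ (Sym2.out_fst_mem _))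

theorem edgesWithin_union_edgeBoundary :
    G.edgesWithin U ∪ G.edgeBoundary U = (G.edgesWithin Uᶜ)ᶜ := by
  refine Set.Subset.antisymm (Set.union_subset ?_ ?_) fun e he => ?_
  · exact disjoint_edgesWithin_compl.subset_compl_right
  · exact disjoint_edgesWithin_compl_edgeBoundary.subset_compl_left
  · induction hinc : G.inc e with | _ x y =>
    rw [Set.mem_compl_iff, mem_edgesWithin_iff hinc] at he
    simp only [edgeBoundary, edgesBetween, Set.mem_union, mem_edgesWithin_iff hinc,
      Set.mem_ofPred_eq, hinc, Sym2.eq_iff, Set.mem_compl_iff] at he ⊢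
    grind

theorem edgesWithin_compl_sdiff : (G.edgesWithin U)ᶜ \ G.edgesWithin Uᶜ = G.edgeBoundary U := by
  rw [Set.sdiff_eq, ← edgesWithin_union_edgeBoundary, Set.inter_union_distrib_left,
    Set.compl_inter_self, Set.empty_union]
  exact Set.inter_eq_right.2 disjoint_edgesWithin_edgeBoundary.subset_compl_left

/-- The end in `U` of an edge of `E_G(U)`. -/
noncomputable def innerEnd (G : Multigraph V E) (U : Set V) (e : G.edgeBoundary U) : V :=
  e.2.choose

/-- The end outside `U` of an edge of `E_G(U)`. -/
noncomputable def outerEnd (G : Multigraph V E) (U : Set V) (e : G.edgeBoundary U) : V :=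
  e.2.choose_spec.choose

theorem inc_edgeBoundary (e : G.edgeBoundary U) : G.inc e = s(G.innerEnd U e, G.outerEnd U e) :=
  e.2.choose_spec.choose_spec.1

theorem innerEnd_mem (e : G.edgeBoundary U) : G.innerEnd U e ∈ U :=
  e.2.choose_spec.choose_spec.2.1

theorem outerEnd_notMem (e : G.edgeBoundary U) : G.outerEnd U e ∉ U :=
  e.2.choose_spec.choose_spec.2.2

theorem StarComponents.innerEnd_injective (h : G.StarComponents (G.edgeBoundary U) Uᶜ) :
    Function.Injective (G.innerEnd U) := by
  intro e f hef
  have hmem (e : G.edgeBoundary U) : G.innerEnd U e ∈ G.inc e := by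
    rw [inc_edgeBoundary]
    exact Sym2.mem_mk_left _ _
  have hrefl : G.EdgeConn (G.edgeBoundary U) e e := ⟨_, _, hmem e, hmem e, .refl⟩
  have hconn : G.EdgeConn (G.edgeBoundary U) e f := ⟨_, _, hmem e, hef ▸ hmem f, .refl⟩
  obtain ⟨c, hcU, hc⟩ := h e e.2
  have hcenter {g : G.edgeBoundary U} (hg : c ∈ G.inc g) : c = G.outerEnd U g := by
    rw [inc_edgeBoundary, Sym2.mem_iff] at hg
    exact hg.resolve_left fun heq => hcU (heq ▸ innerEnd_mem g)
  obtain ⟨hce, -, hunique⟩ := hc e e.2 hrefl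
  have hcf := (hc f f.2 hconn).1
  refine Subtype.ext (hunique f f.2 hconn ?_).symm
  rw [inc_edgeBoundary, inc_edgeBoundary, hef, ← hcenter hce, ← hcenter hcf]

theorem IsClique.reach (hU : G.IsClique U) (hx : x ∈ U) (hy : y ∈ U) :
    G.Reach (G.edgesWithin U) x y := by
  rcases eq_or_ne x y with rfl | hxy
  · exact .refl
  obtain ⟨e, hinc, -⟩ := hU.1 x hx y hy hxy
  exact reach_of_inc ((mem_edgesWithin_iff hinc).2 ⟨hx, hy⟩) hinc

theorem IsClique.isWeightedComplete [Fintype E] (hU : G.IsClique U) :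
    G.IsWeightedComplete (G.edgesWithin U) (U.indicator 1) := by
  intro x y hxy
  by_cases hmem : x ∈ U ∧ y ∈ U
  · obtain ⟨e, hinc, hunique⟩ := hU.1 x hmem.1 y hmem.2 hxy
    rw [Set.indicator_of_mem hmem.1, Set.indicator_of_mem hmem.2, Pi.one_apply, Pi.one_apply,
      mul_one, Finset.card_eq_one]
    refine ⟨e, Finset.eq_singleton_iff_unique_mem.2 ⟨?_, fun f hf => ?_⟩⟩
    · exact mem_filter.2 ⟨mem_univ e, (mem_edgesWithin_iff hinc).2 hmem, hinc⟩
    · exact hunique f (mem_filter.1 hf).2.2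
  · have hzero : U.indicator 1 x * U.indicator 1 y = (0 : ℕ) := by
      rw [mul_eq_zero, Set.indicator_apply_eq_zero, Set.indicator_apply_eq_zero]
      tauto
    rw [hzero, Finset.card_eq_zero, Finset.filter_eq_empty_iff]
    rintro e - ⟨he, hinc⟩
    exact hmem ((mem_edgesWithin_iff hinc).1 he)

end Boundary

/-! ### Components outside the clique -/

section Components

variable {U : Set V} {R : Set E}

/-- A chosen representative of the component of `x` in the spanning subgraph `G⟨R⟩`. -/
noncomputable def rep (G : Multigraph V E) (R : Set E) (x : V) : V :=
  (Quotient.mk (G.contractSetoid R) x).out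

theorem rep_eq_rep_iff : G.rep R x = G.rep R y ↔ G.Reach R x y :=
  Quotient.out_inj.trans Quotient.eq

theorem reach_rep (x : V) : G.Reach R x (G.rep R x) :=
  Reach.symm (Quotient.mk_out (s := G.contractSetoid R) x)

theorem rep_eq_of_inc {e : E} (he : e ∈ R) (hinc : G.inc e = s(x, y)) : G.rep R x = G.rep R y :=
  rep_eq_rep_iff.2 (reach_of_inc he hinc)

theorem isComponentMap_rep : G.IsComponentMap R (Set.rangeFactorization (G.rep R)) :=
  isComponentMap_rangeFactorization (fun _ he _ _ => rep_eq_of_inc he) reach_rep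

theorem rep_eq_self_of_mem (hR : R ⊆ G.edgesWithin Uᶜ) (hx : x ∈ U) : G.rep R x = x := by
  by_contra hne
  obtain ⟨e, he, hxe⟩ := (reach_rep x).symm.exists_inc hne
  exact hR he x hxe hx

theorem rep_notMem (hR : R ⊆ G.edgesWithin Uᶜ) (hx : x ∉ U) : G.rep R x ∉ U := by
  intro hmem
  obtain ⟨e, he, hxe⟩ := (reach_rep x).exists_inc fun heq => hx (heq ▸ hmem)
  exact hR he _ hxe hmem

theorem disjoint_image_rep_compl (hR : R ⊆ G.edgesWithin Uᶜ) : Disjoint (G.rep R '' Uᶜ) U :=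
  Set.disjoint_left.2 <| Set.forall_mem_image.2 fun _ hx => rep_notMem hR hx

theorem ncard_range_rep [Finite V] (hR : R ⊆ G.edgesWithin Uᶜ) :
    (Set.range (G.rep R)).ncard = (G.rep R '' Uᶜ).ncard + U.ncard := by
  rw [← Set.image_univ, ← Set.compl_union_self U, Set.image_union,
    Set.image_congr (f := G.rep R) (g := id) fun x hx => rep_eq_self_of_mem hR hx, Set.image_id,
    Set.ncard_union_eq (disjoint_image_rep_compl hR)]

theorem ncard_compl_le [Finite V] [Finite E] (hR : R ⊆ G.edgesWithin Uᶜ) :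
    Uᶜ.ncard ≤ R.ncard + (G.rep R '' Uᶜ).ncard := by
  have hle := (isComponentMap_rep (G := G) (R := R)).card_le
  rw [Nat.card_coe_set_eq, ncard_range_rep hR, ← Set.ncard_add_ncard_compl U] at hle
  lia

/-- A chosen representative of the component of `x` in `G⟨E_G(U) ∪ R⟩`, provided that
`R ⊆ E(G - U)` and every vertex of `U` is incident with at most one edge of `E_G(U)`. -/
noncomputable def boundaryRep (G : Multigraph V E) (U : Set V) (R : Set E) : V → V :=
  Function.extend (G.innerEnd U) (fun e => G.rep R (G.outerEnd U e)) (G.rep R)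

theorem boundaryRep_innerEnd (hinj : Function.Injective (G.innerEnd U))
    (e : G.edgeBoundary U) : G.boundaryRep U R (G.innerEnd U e) = G.rep R (G.outerEnd U e) :=
  hinj.extend_apply _ _ e

theorem boundaryRep_of_notMem_range (hx : x ∉ Set.range (G.innerEnd U)) :
    G.boundaryRep U R x = G.rep R x :=
  Function.extend_apply' _ _ _ hx

theorem boundaryRep_of_notMem (hx : x ∉ U) : G.boundaryRep U R x = G.rep R x := by
  refine boundaryRep_of_notMem_range ?_
  rintro ⟨e, rfl⟩
  exact hx (innerEnd_mem e)

theorem isComponentMap_boundaryRep (hR : R ⊆ G.edgesWithin Uᶜ)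
    (hinj : Function.Injective (G.innerEnd U)) :
    G.IsComponentMap (G.edgeBoundary U ∪ R) (Set.rangeFactorization (G.boundaryRep U R)) := by
  have hends (e : G.edgeBoundary U) :
      G.boundaryRep U R (G.innerEnd U e) = G.boundaryRep U R (G.outerEnd U e) := by
    rw [boundaryRep_innerEnd hinj, boundaryRep_of_notMem (outerEnd_notMem e)]
  refine isComponentMap_rangeFactorization ?_ fun x => ?_
  · rintro e (he | he) x y hinc
    · have hxy := (inc_edgeBoundary ⟨e, he⟩).symm.trans hinc
      rcases Sym2.eq_iff.1 hxy with ⟨rfl, rfl⟩ | ⟨rfl, rfl⟩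
      exacts [hends _, (hends _).symm]
    · obtain ⟨hx, hy⟩ := (mem_edgesWithin_iff hinc).1 (hR he)
      rw [boundaryRep_of_notMem hx, boundaryRep_of_notMem hy, rep_eq_of_inc he hinc]
  · by_cases hx : x ∈ Set.range (G.innerEnd U)
    · obtain ⟨e, rfl⟩ := hx
      rw [boundaryRep_innerEnd hinj]
      exact (reach_of_inc (.inl e.2) (inc_edgeBoundary e)).trans
        ((reach_rep _).mono Set.subset_union_right)
    · rw [boundaryRep_of_notMem_range hx]
      exact (reach_rep x).mono Set.subset_union_right

theorem range_boundaryRep (hR : R ⊆ G.edgesWithin Uᶜ)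
    (hinj : Function.Injective (G.innerEnd U)) :
    Set.range (G.boundaryRep U R) =
      G.rep R '' Uᶜ ∪ U \ Set.range (G.innerEnd U) := by
  refine Set.Subset.antisymm (Set.range_subset_iff.2 fun x => ?_) (Set.union_subset ?_ ?_)
  · by_cases hx : x ∈ Set.range (G.innerEnd U)
    · obtain ⟨e, rfl⟩ := hx
      rw [boundaryRep_innerEnd hinj]
      exact .inl (Set.mem_image_of_mem _ (outerEnd_notMem e))
    · rw [boundaryRep_of_notMem_range hx]
      by_cases hxU : x ∈ U
      · exact .inr (by rw [rep_eq_self_of_mem hR hxU]; exact ⟨hxU, hx⟩)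
      · exact .inl (Set.mem_image_of_mem _ hxU)
  · rintro _ ⟨x, hx, rfl⟩
    exact ⟨x, boundaryRep_of_notMem hx⟩
  · rintro x ⟨hxU, hx⟩
    exact ⟨x, by rw [boundaryRep_of_notMem_range hx, rep_eq_self_of_mem hR hxU]⟩

theorem ncard_range_boundaryRep [Finite V] (hR : R ⊆ G.edgesWithin Uᶜ)
    (hinj : Function.Injective (G.innerEnd U)) :
    (Set.range (G.boundaryRep U R)).ncard + (G.edgeBoundary U).ncard =
      (G.rep R '' Uᶜ).ncard + U.ncard := by
  have hsub : Set.range (G.innerEnd U) ⊆ U := Set.range_subset_iff.2 innerEnd_mem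
  rw [range_boundaryRep hR hinj,
    Set.ncard_union_eq ((disjoint_image_rep_compl hR).mono_right Set.sdiff_subset), add_assoc,
    ← Nat.card_coe_set_eq (G.edgeBoundary U), ← Set.ncard_range_of_injective hinj,
    Set.ncard_sdiff_add_ncard_of_subset hsub]

theorem card_fiber_boundaryRep [Fintype V] [Fintype E] (hR : R ⊆ G.edgesWithin Uᶜ)
    (hinj : Function.Injective (G.innerEnd U)) {a : V} (ha : a ∉ U) :
    #{x | x ∈ U ∧ G.boundaryRep U R x = a} =
      #{e : G.edgeBoundary U | G.rep R (G.outerEnd U e) = a} := by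
  rw [← Finset.card_image_of_injective _ hinj]
  congr 1
  ext x
  simp only [mem_filter_univ, mem_image]
  constructor
  · rintro ⟨hxU, rfl⟩
    by_cases hx : x ∈ Set.range (G.innerEnd U)
    · obtain ⟨e, rfl⟩ := hx
      exact ⟨e, (boundaryRep_innerEnd hinj e).symm, rfl⟩
    · rw [boundaryRep_of_notMem_range hx, rep_eq_self_of_mem hR hxU] at ha
      exact absurd hxU ha
  · rintro ⟨e, rfl, rfl⟩
    exact ⟨innerEnd_mem e, boundaryRep_innerEnd hinj e⟩

theorem card_fiber_boundaryRep_eq_one [Fintype V] (hR : R ⊆ G.edgesWithin Uᶜ)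
    (hinj : Function.Injective (G.innerEnd U)) {a : V}
    (ha : a ∈ U \ Set.range (G.innerEnd U)) :
    #{x | x ∈ U ∧ G.boundaryRep U R x = a} = 1 := by
  refine Finset.card_eq_one.2 ⟨a, Finset.eq_singleton_iff_unique_mem.2 ⟨?_, fun x hx => ?_⟩⟩
  · rw [mem_filter_univ, boundaryRep_of_notMem_range ha.2, rep_eq_self_of_mem hR ha.1]
    exact ⟨ha.1, rfl⟩
  · obtain ⟨hxU, rfl⟩ := (mem_filter.1 hx).2
    by_cases hx : x ∈ Set.range (G.innerEnd U)
    · obtain ⟨e, rfl⟩ := hx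
      rw [boundaryRep_innerEnd hinj] at ha
      exact absurd ha.1 (rep_notMem hR (outerEnd_notMem e))
    · rw [boundaryRep_of_notMem_range hx, rep_eq_self_of_mem hR hxU]

theorem prod_card_fiber_boundaryRep [Fintype V] [Fintype E] (hR : R ⊆ G.edgesWithin Uᶜ)
    (hinj : Function.Injective (G.innerEnd U)) :
    ∏ a ∈ univ.image (G.boundaryRep U R), #{x | x ∈ U ∧ G.boundaryRep U R x = a} =
      ∏ a ∈ (G.rep R '' Uᶜ).toFinset, #{e : G.edgeBoundary U | G.rep R (G.outerEnd U e) = a} := by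
  have himage : univ.image (G.boundaryRep U R) =
      (G.rep R '' Uᶜ ∪ U \ Set.range (G.innerEnd U)).toFinset := by
    rw [← Set.toFinset_range, Set.toFinset_inj, range_boundaryRep hR hinj]
  rw [himage, ← Finset.prod_subset (Set.toFinset_mono Set.subset_union_left)]
  · refine Finset.prod_congr rfl fun a ha => ?_
    exact card_fiber_boundaryRep hR hinj
      ((disjoint_image_rep_compl hR).notMem_of_mem_left (Set.mem_toFinset.1 ha))
  · intro a ha ha'
    rw [Set.mem_toFinset] at ha ha'
    exact card_fiber_boundaryRep_eq_one hR hinj (ha.resolve_left ha')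

end Components

/-! ### Counting with a fixed forest outside the clique -/

theorem card_transversals {α β : Type*} [Fintype α] (q : α → β) (J : Set β) [Fintype J] :
    #{S : Set α | q '' S = J ∧ S.ncard = J.ncard} = ∏ b ∈ J.toFinset, #{a | q a = b} := by
  have hchoice : ∏ b ∈ J.toFinset, #{a | q a = b} =
      #(Fintype.piFinset fun b : J => ({a | q a = b} : Finset α)) := by
    rw [Fintype.card_piFinset]
    exact Finset.prod_subtype _ (fun b => Set.mem_toFinset) fun b => #{a | q a = b}
  have hinj {s : J → α} (hs : ∀ b, q (s b) = b) : Function.Injective s := fun b c hbc =>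
    Subtype.ext ((hs b).symm.trans ((congrArg q hbc).trans (hs c)))
  have hcard {s : J → α} (hs : ∀ b, q (s b) = b) : (Set.range s).ncard = J.ncard := by
    rw [Set.ncard_range_of_injective (hinj hs), Nat.card_coe_set_eq]
  rw [hchoice]
  refine (Finset.card_bij (fun s _ => Set.range s) ?_ ?_ ?_).symm
  · intro s hs
    simp only [Fintype.mem_piFinset, mem_filter_univ] at hs ⊢
    refine ⟨?_, hcard hs⟩
    rw [← Set.range_comp, show q ∘ s = Subtype.val from funext hs, Subtype.range_coe]
  · intro s hs t ht hst
    simp only [Fintype.mem_piFinset, mem_filter_univ] at hs ht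
    funext b
    obtain ⟨c, hc⟩ : s b ∈ Set.range t := hst ▸ Set.mem_range_self b
    have hcb : c = b := Subtype.ext ((ht c).symm.trans ((congrArg q hc).trans (hs b)))
    rw [← hc, hcb]
  · intro S hS
    obtain ⟨himage, hS⟩ := (mem_filter.1 hS).2
    have hex (b : J) : ∃ a ∈ S, q a = b := by
      rw [← Set.mem_image, himage]
      exact b.2
    choose s hsS hs using hex
    refine ⟨s, by simpa only [Fintype.mem_piFinset, mem_filter_univ] using hs, ?_⟩
    exact Set.eq_of_subset_of_ncard_le (Set.range_subset_iff.2 hsS) (hS.trans_le (hcard hs).ge)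

section Modulo

variable {U : Set V} {R : Set E}

/-- `T` is the edge set of a spanning tree of `G•U`, where `U` induces a connected subgraph and is
nonempty, so that `G•U` has one vertex more than `G - U`. -/
def IsTreeModulo (G : Multigraph V E) (U : Set V) (T : Set E) : Prop :=
  G.ConnectedOn (G.edgesWithin U ∪ T) ∧ T.ncard = Uᶜ.ncard

theorem ConnectedOn.exists_rep_outerEnd_eq {S : Set (G.edgeBoundary U)}
    (hconn : G.ConnectedOn (G.edgesWithin U ∪ (R ∪ Subtype.val '' S)))
    (hR : R ⊆ G.edgesWithin Uᶜ) (hy : y ∈ U) (hx : x ∉ U) :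
    ∃ e ∈ S, G.rep R (G.outerEnd U e) = G.rep R x := by
  by_contra! hnone
  have hinner {p : V} (hp : p ∈ U) : G.rep R p ≠ G.rep R x := by
    intro hpx
    rw [rep_eq_self_of_mem hR hp] at hpx
    exact rep_notMem hR hx (hpx ▸ hp)
  have hclosed : (G.rep R x = G.rep R x) = (G.rep R y = G.rep R x) := by
    refine (hconn x y).apply_eq (fun p => G.rep R p = G.rep R x) ?_
    rintro e (he | he | ⟨e, he, rfl⟩) p q hinc
    · obtain ⟨hp, hq⟩ := (mem_edgesWithin_iff hinc).1 he
      rw [eq_false (hinner hp), eq_false (hinner hq)]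
    · rw [rep_eq_of_inc he hinc]
    · rw [inc_edgeBoundary, Sym2.eq_iff] at hinc
      have hends := (eq_false (hinner (innerEnd_mem e))).trans (eq_false (hnone e he)).symm
      rcases hinc with ⟨rfl, rfl⟩ | ⟨rfl, rfl⟩
      exacts [hends, hends.symm]
  exact hinner hy (hclosed.mp rfl)

theorem IsClique.connectedOn_iff (hU : G.IsClique U) (hne : U.Nonempty)
    (hR : R ⊆ G.edgesWithin Uᶜ) {S : Set (G.edgeBoundary U)} :
    G.ConnectedOn (G.edgesWithin U ∪ (R ∪ Subtype.val '' S)) ↔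
      (fun e => G.rep R (G.outerEnd U e)) '' S = G.rep R '' Uᶜ := by
  obtain ⟨u, hu⟩ := hne
  refine ⟨fun hconn => Set.Subset.antisymm ?_ ?_, fun himage => ?_⟩
  · exact Set.image_subset_iff.2 fun e _ => Set.mem_image_of_mem _ (outerEnd_notMem e)
  · exact Set.image_subset_iff.2 fun x hx => hconn.exists_rep_outerEnd_eq hR hu hx
  · have hreach (x : V) : G.Reach (G.edgesWithin U ∪ (R ∪ Subtype.val '' S)) x u := by
      by_cases hx : x ∈ U
      · exact (hU.reach hx hu).mono Set.subset_union_left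
      obtain ⟨e, he, hex⟩ := himage.superset (Set.mem_image_of_mem _ hx)
      have houter : G.Reach R x (G.outerEnd U e) := rep_eq_rep_iff.1 hex.symm
      have hinner := hU.reach (innerEnd_mem e) hu
      have hedge : G.Reach (Subtype.val '' S) (G.innerEnd U e) (G.outerEnd U e) :=
        reach_of_inc ⟨e, he, rfl⟩ (inc_edgeBoundary e)
      exact ((houter.mono fun _ h => .inr (.inl h)).trans
        (hedge.mono fun _ h => .inr (.inr h)).symm).trans (hinner.mono Set.subset_union_left)
    exact fun x y => (hreach x).trans (hreach y).symm

theorem ncard_union_image_edgeBoundary [Finite E] (hR : R ⊆ G.edgesWithin Uᶜ)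
    (S : Set (G.edgeBoundary U)) : (R ∪ Subtype.val '' S).ncard = R.ncard + S.ncard := by
  rw [Set.ncard_union_eq, Set.ncard_image_of_injective S Subtype.val_injective]
  exact disjoint_edgesWithin_compl_edgeBoundary.mono hR (Subtype.coe_image_subset _ S)

theorem union_image_inter_edgeBoundary (hR : R ⊆ G.edgesWithin Uᶜ) (S : Set (G.edgeBoundary U)) :
    (R ∪ Subtype.val '' S) ∩ G.edgeBoundary U = Subtype.val '' S := by
  rw [Set.union_inter_distrib_right,
    (disjoint_edgesWithin_compl_edgeBoundary.mono_left hR).inter_eq, Set.empty_union,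
    Set.inter_eq_left.2 (Subtype.coe_image_subset _ S)]

theorem IsClique.isTreeModulo_iff [Finite V] [Finite E] (hU : G.IsClique U) (hne : U.Nonempty)
    (hR : R ⊆ G.edgesWithin Uᶜ) {S : Set (G.edgeBoundary U)} :
    G.IsTreeModulo U (R ∪ Subtype.val '' S) ↔
      R.ncard + (G.rep R '' Uᶜ).ncard = Uᶜ.ncard ∧
        (fun e => G.rep R (G.outerEnd U e)) '' S = G.rep R '' Uᶜ ∧
        S.ncard = (G.rep R '' Uᶜ).ncard := by
  rw [IsTreeModulo, hU.connectedOn_iff hne hR, ncard_union_image_edgeBoundary hR]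
  have hle := ncard_compl_le hR
  have himage (h : (fun e => G.rep R (G.outerEnd U e)) '' S = G.rep R '' Uᶜ) :
      (G.rep R '' Uᶜ).ncard ≤ S.ncard := h ▸ Set.ncard_image_le S.toFinite
  grind

theorem IsSpanningTree.ncard_add_ncard_image_rep [Finite V] [Finite E]
    (hT : G.IsSpanningTree T) (hRT : R ⊆ T) (hR : R ⊆ G.edgesWithin Uᶜ) :
    R.ncard + (G.rep R '' Uᶜ).ncard = Uᶜ.ncard := by
  have hconn := hT.1
  rw [← Set.union_sdiff_cancel hRT, ← isComponentMap_rep.connectedOn_map] at hconn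
  have hle := hconn.card_le
  have hcompl := ncard_compl_le hR
  have hsplit := Set.ncard_sdiff_add_ncard_of_subset hRT
  have htree := hT.2
  rw [Nat.card_coe_set_eq, ncard_range_rep hR] at hle
  rw [← Set.ncard_add_ncard_compl U] at htree
  lia

variable [Fintype E]

theorem IsClique.sum_treesModulo [Fintype V] (hU : G.IsClique U) (hne : U.Nonempty)
    (hR : R ⊆ G.edgesWithin Uᶜ) (hforest : R.ncard + (G.rep R '' Uᶜ).ncard = Uᶜ.ncard) (n : ℕ) :
    ∑ T ∈ setsBetween (G.IsTreeModulo U) R (R ∪ G.edgeBoundary U),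
        n ^ (T ∩ G.edgeBoundary U).ncard =
      n ^ (G.rep R '' Uᶜ).ncard *
        ∏ a ∈ (G.rep R '' Uᶜ).toFinset, #{e | G.rep R (G.outerEnd U e) = a} := by
  rw [sum_setsBetween_union (disjoint_edgesWithin_compl_edgeBoundary.mono_left hR),
    ← card_transversals (fun e => G.rep R (G.outerEnd U e)), mul_comm, ← smul_eq_mul,
    ← Finset.sum_const]
  refine Finset.sum_congr ?_ fun S hS => ?_
  · simp only [hU.isTreeModulo_iff hne hR, hforest, true_and]
  · rw [union_image_inter_edgeBoundary hR, Set.ncard_image_of_injective S Subtype.val_injective,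
      (mem_filter.1 hS).2.2]

theorem sum_indicator_one [Fintype V] (U : Set V) (p : V → Prop) :
    ∑ x with p x, (U.indicator 1 x : ℕ) = #{x | x ∈ U ∧ p x} := by
  simp only [Set.indicator_apply, Pi.one_apply, Finset.sum_boole, Nat.cast_id, filter_filter,
    and_comm]

theorem IsClique.card_trees_mul_pow [Fintype V] (hU : G.IsClique U) (hne : U.Nonempty)
    (hinj : Function.Injective (G.innerEnd U)) (hR : R ⊆ G.edgesWithin Uᶜ)
    (hforest : R.ncard + (G.rep R '' Uᶜ).ncard = Uᶜ.ncard) :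
    #(setsBetween G.IsSpanningTree (G.edgeBoundary U ∪ R)
        (G.edgeBoundary U ∪ R ∪ G.edgesWithin U)) * U.ncard ^ (2 + (G.edgeBoundary U).ncard) =
      U.ncard ^ U.ncard * (U.ncard ^ (G.rep R '' Uᶜ).ncard *
        ∏ a ∈ (G.rep R '' Uᶜ).toFinset, #{e | G.rep R (G.outerEnd U e) = a}) := by
  have hrange := ncard_range_boundaryRep hR hinj
  have hcard : (G.edgeBoundary U ∪ R).ncard + Nat.card (Set.range (G.boundaryRep U R)) =
      Nat.card V := by
    rw [Set.ncard_union_eq (disjoint_edgesWithin_compl_edgeBoundary.mono_left hR).symm,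
      Nat.card_coe_set_eq, ← Set.ncard_add_ncard_compl U]
    lia
  have hπ := isComponentMap_boundaryRep hR hinj
  have : Nonempty (Set.range (G.boundaryRep U R)) := hne.to_type.map fun u => ⟨_, u, rfl⟩
  have hcount := hU.isWeightedComplete.card_trees_union_mul_sq hπ hcard
    fun _ _ _ h => h.card_trees_mul_sq
  have htotal : ∑ x, (U.indicator 1 x : ℕ) = U.ncard := by
    simpa [Set.ncard_eq_toFinset_card'] using sum_indicator_one U fun _ => True
  rw [prod_sum_fiber_eq_prod_image hπ.surjective Subtype.val_injective
    (Set.rangeFactorization_coe _), htotal, ← Nat.card_eq_fintype_card,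
    Nat.card_coe_set_eq] at hcount
  simp only [sum_indicator_one, prod_card_fiber_boundaryRep hR hinj] at hcount
  rw [pow_add, ← mul_assoc, hcount, mul_right_comm, ← pow_add, hrange]
  ring

theorem IsClique.card_trees_mul_pow_eq_sum [Finite V] (hU : G.IsClique U) (hne : U.Nonempty)
    (hinj : Function.Injective (G.innerEnd U)) (hR : R ⊆ G.edgesWithin Uᶜ) :
    #(setsBetween G.IsSpanningTree (G.edgeBoundary U ∪ R)
        (G.edgeBoundary U ∪ R ∪ G.edgesWithin U)) * U.ncard ^ (2 + (G.edgeBoundary U).ncard) =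
      U.ncard ^ U.ncard * ∑ T ∈ setsBetween (G.IsTreeModulo U) R (R ∪ G.edgeBoundary U),
        U.ncard ^ (T ∩ G.edgeBoundary U).ncard := by
  have := Fintype.ofFinite V
  by_cases hforest : R.ncard + (G.rep R '' Uᶜ).ncard = Uᶜ.ncard
  · rw [hU.sum_treesModulo hne hR hforest, hU.card_trees_mul_pow hne hinj hR hforest]
  have hG : setsBetween G.IsSpanningTree (G.edgeBoundary U ∪ R)
      (G.edgeBoundary U ∪ R ∪ G.edgesWithin U) = ∅ := by
    refine Finset.eq_empty_of_forall_notMem fun T hT => hforest ?_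
    obtain ⟨htree, hRT, -⟩ := mem_setsBetween.1 hT
    exact htree.ncard_add_ncard_image_rep (Set.subset_union_right.trans hRT) hR
  rw [hG, sum_setsBetween_union (disjoint_edgesWithin_compl_edgeBoundary.mono_left hR)]
  simp only [hU.isTreeModulo_iff hne hR, hforest, false_and, filter_false, sum_empty, card_empty,
    zero_mul, mul_zero]

theorem IsClique.card_trees_mul_pow_eq_sum_treesModulo [Finite V] (hU : G.IsClique U)
    (hne : U.Nonempty) (hinj : Function.Injective (G.innerEnd U)) {N : Set E}
    (hN : N ⊆ G.edgesWithin Uᶜ) :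
    #(setsBetween G.IsSpanningTree (G.edgeBoundary U ∪ N) Set.univ) *
        U.ncard ^ (2 + (G.edgeBoundary U).ncard) =
      U.ncard ^ U.ncard * ∑ T ∈ setsBetween (G.IsTreeModulo U) N (G.edgesWithin U)ᶜ,
        U.ncard ^ (T ∩ G.edgeBoundary U).ncard := by
  have hMN : (G.edgeBoundary U ∪ N) ∩ G.edgesWithin Uᶜ = N := by
    rw [Set.union_inter_distrib_right, disjoint_edgesWithin_compl_edgeBoundary.symm.inter_eq,
      Set.empty_union, Set.inter_eq_left.2 hN]
  rw [Finset.card_eq_sum_ones,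
    sum_setsBetween_fiberwise_inter _ _ _ (G.edgesWithin Uᶜ) fun _ => 1,
    sum_setsBetween_fiberwise_inter _ _ _ (G.edgesWithin Uᶜ)
      fun T => U.ncard ^ (T ∩ G.edgeBoundary U).ncard,
    hMN, Set.inter_eq_left.2 hN, Set.univ_inter,
    Set.inter_eq_right.2 disjoint_edgesWithin_compl.symm.subset_compl_right, Finset.sum_mul,
    Finset.mul_sum]
  refine Finset.sum_congr rfl fun R hR => ?_
  obtain ⟨hNR, hR⟩ := (mem_filter.1 hR).2
  have hB : Set.univ \ G.edgesWithin Uᶜ ∪ R = G.edgeBoundary U ∪ R ∪ G.edgesWithin U := by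
    rw [← Set.compl_eq_univ_sdiff, ← edgesWithin_union_edgeBoundary]
    ac_rfl
  rw [← Finset.card_eq_sum_ones, Set.union_assoc, Set.union_eq_right.2 hNR, hB,
    hU.card_trees_mul_pow_eq_sum hne hinj hR, edgesWithin_compl_sdiff,
    Set.union_comm (G.edgeBoundary U)]

end Modulo

/-! ### Spanning trees of the contraction -/

section Contract

variable {U : Set V} {u : V}

theorem IsClique.mk_eq_mk_iff (hU : G.IsClique U) (hu : u ∈ U) :
    Quotient.mk (G.contractSetoid (G.edgesWithin U)) x = Quotient.mk _ u ↔ x ∈ U := by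
  rw [(G.isComponentMap_mk _).eq_iff_reach]
  refine ⟨fun h => ?_, fun hx => hU.reach hx hu⟩
  by_contra hx
  obtain ⟨e, he, hxe⟩ := h.symm.exists_inc fun hux => hx (hux ▸ hu)
  exact hx (he x hxe)

theorem IsClique.card_quotient [Finite V] (hU : G.IsClique U) (hu : u ∈ U) :
    Nat.card (Quotient (G.contractSetoid (G.edgesWithin U))) = Uᶜ.ncard + 1 := by
  let q : Option ↥Uᶜ → Quotient (G.contractSetoid (G.edgesWithin U)) :=
    fun z => z.elim (Quotient.mk _ u) fun x => Quotient.mk _ x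
  have hq : Function.Bijective q := by
    constructor
    · have hsome (x : ↥Uᶜ) : q (some x) ≠ q none := fun h => x.2 ((hU.mk_eq_mk_iff hu).1 h)
      rintro (- | x) (- | y) hxy
      · rfl
      · exact absurd hxy.symm (hsome y)
      · exact absurd hxy (hsome x)
      · by_contra hne
        have hreach := ((G.isComponentMap_mk (G.edgesWithin U)).eq_iff_reach x y).1 hxy
        obtain ⟨e, he, hye⟩ := hreach.exists_inc fun h => hne (congrArg some (Subtype.ext h))
        exact y.2 (he y hye)
    · refine Quotient.mk_surjective.forall.2 fun x => ?_
      by_cases hx : x ∈ U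
      · exact ⟨none, ((hU.mk_eq_mk_iff hu).2 hx).symm⟩
      · exact ⟨some ⟨x, hx⟩, rfl⟩
  rw [← Nat.card_eq_of_bijective q hq, Finite.card_option, Nat.card_coe_set_eq]

theorem IsClique.isSpanningTree_contract_iff [Finite V] (hU : G.IsClique U) (hu : u ∈ U)
    {T : Set {e // e ∉ G.edgesWithin U}} :
    (G.contract (G.edgesWithin U)).IsSpanningTree T ↔ G.IsTreeModulo U (Subtype.val '' T) := by
  rw [IsSpanningTree, IsTreeModulo, connectedOn_contract, hU.card_quotient hu,
    Nat.add_right_cancel_iff, Set.ncard_image_of_injective T Subtype.val_injective]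

theorem IsClique.mk_mem_inc_contract_iff (hU : G.IsClique U) (hu : u ∈ U)
    (e : {e // e ∉ G.edgesWithin U}) :
    Quotient.mk _ u ∈ (G.contract (G.edgesWithin U)).inc e ↔ e.1 ∈ G.edgeBoundary U := by
  change _ ∈ (G.inc e.1).map _ ↔ _
  simp only [Sym2.mem_map, hU.mk_eq_mk_iff hu]
  constructor
  · rintro ⟨x, hxe, hx⟩
    have hmem : e.1 ∈ G.edgesWithin U ∪ G.edgeBoundary U := by
      rw [edgesWithin_union_edgeBoundary]
      exact fun he => he x hxe hx
    exact hmem.resolve_left e.2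
  · intro he
    exact ⟨_, inc_edgeBoundary ⟨e.1, he⟩ ▸ Sym2.mem_mk_left _ _, innerEnd_mem _⟩

theorem IsClique.image_incident_eq (hU : G.IsClique U) (hu : u ∈ U)
    (T : Set {e // e ∉ G.edgesWithin U}) :
    Subtype.val '' {e ∈ T | Quotient.mk _ u ∈ (G.contract (G.edgesWithin U)).inc e} =
      Subtype.val '' T ∩ G.edgeBoundary U := by
  simp only [hU.mk_mem_inc_contract_iff hu]
  rw [← Set.image_inter_preimage]
  rfl

theorem IsClique.bijOn_image_ST [Finite V] [Fintype E] (hU : G.IsClique U) (hu : u ∈ U)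
    {N : Set E} (hN : Disjoint (G.edgesWithin U) N) :
    Set.BijOn (Subtype.val '' ·) ((G.contract (G.edgesWithin U)).ST (Subtype.val ⁻¹' N))
      (setsBetween (G.IsTreeModulo U) N (G.edgesWithin U)ᶜ) := by
  have hsub {T : Set {e // e ∉ G.edgesWithin U}} :
      Subtype.val ⁻¹' N ⊆ T ↔ N ⊆ Subtype.val '' T := by
    refine ⟨fun h e he => ?_, fun h => ?_⟩
    · exact ⟨⟨e, hN.notMem_of_mem_right he⟩, h he, rfl⟩
    · exact (Set.preimage_mono h).trans_eq (Set.preimage_image_eq T Subtype.val_injective)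
  refine ⟨fun T hT => ?_, Subtype.val_injective.image_injective.injOn, fun T hT => ?_⟩
  · exact mem_coe.2 (mem_setsBetween.2 ⟨(hU.isSpanningTree_contract_iff hu).1 hT.1, hsub.1 hT.2,
      Subtype.coe_image_subset _ T⟩)
  · obtain ⟨htree, hNT, hT⟩ := mem_setsBetween.1 (mem_coe.1 hT)
    have himage : Subtype.val '' (Subtype.val ⁻¹' T : Set {e // e ∉ G.edgesWithin U}) = T :=
      Set.image_preimage_eq_of_subset (hT.trans Subtype.range_coe.superset)
    refine ⟨_, ⟨(hU.isSpanningTree_contract_iff hu).2 ?_, hsub.2 ?_⟩, himage⟩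
    · rwa [himage]
    · rwa [himage]

theorem IsClique.finsum_ST_contract [Finite V] [Fintype E] (hU : G.IsClique U) (hu : u ∈ U)
    {N : Set E} (hN : Disjoint (G.edgesWithin U) N)
    {α : Type*} [Semiring α] (n : α) :
    ∑ᶠ T ∈ (G.contract (G.edgesWithin U)).ST (Subtype.val ⁻¹' N),
        n ^ {e ∈ T | Quotient.mk _ u ∈ (G.contract (G.edgesWithin U)).inc e}.ncard =
      ∑ T ∈ setsBetween (G.IsTreeModulo U) N (G.edgesWithin U)ᶜ,
        n ^ (T ∩ G.edgeBoundary U).ncard := by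
  rw [← finsum_mem_coe_finset]
  refine finsum_mem_eq_of_bijOn _ (hU.bijOn_image_ST hu hN) fun T _ => ?_
  rw [← hU.image_incident_eq hu, Set.ncard_image_of_injective _ Subtype.val_injective]

end Contract

end Multigraph

/-- with `U` a clique, `M = E_G(U)`, `N ⊆ E(G − U)`, and every
component of `G[M]` a star with center in `V − U`,
`τ_G(M ∪ N) = |U|^{|U|−2−|M|} Σ_{T ∈ ST_{G•U}(N)} |U|^{|E_T(u)|}`. -/
theorem tau_contract_clique {V : Type u} {E : Type v} [Fintype V] [Fintype E]
    (G : Multigraph V E) (hconn : G.Connected) (hloop : G.Loopless)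
    (U : Set V) (hU : G.IsClique U) (u₀ : V) (hu₀ : u₀ ∈ U)
    (M : Set E) (hM : M = G.edgeBoundary U)
    (N : Set E) (hN : N ⊆ G.edgesWithin Uᶜ)
    (hstar : G.StarComponents M Uᶜ) :
    (G.tau (M ∪ N) : ℚ) =
      (U.ncard : ℚ) ^ ((U.ncard : ℤ) - 2 - (M.ncard : ℤ)) *
        ∑ᶠ T ∈ (G.contract (G.edgesWithin U)).ST (Subtype.val ⁻¹' N),
          (U.ncard : ℚ) ^
            ({e ∈ T | Quotient.mk (G.contractSetoid (G.edgesWithin U)) u₀ ∈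
              (G.contract (G.edgesWithin U)).inc e}).ncard := by
  subst hM
  have hn : (U.ncard : ℚ) ≠ 0 := by
    exact_mod_cast Set.ncard_ne_zero_of_mem hu₀
  have hcount := hU.card_trees_mul_pow_eq_sum_treesModulo ⟨u₀, hu₀⟩ hstar.innerEnd_injective hN
  rw [tau_eq_card_setsBetween, hU.finsum_ST_contract hu₀ (disjoint_edgesWithin_compl.mono_right hN),
    sub_sub, zpow_sub₀ hn, div_mul_eq_mul_div, eq_div_iff (zpow_ne_zero _ hn)]
  exact_mod_cast hcount

end PaperST
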